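/- arXiv:0912.0061 — 3 statements merged into one kernel-verified Lean document; each statement's English description precedes it below -/
import Mathlib

section
/- Let Y be a topological space, let h : Y → Y be a homeomorphism with north–south dynamics with attracting fixed point p⁺ and repelling fixed point p⁻, and let V be a nonempty connected open subset of Y with p⁺ ∈ V and p⁻ ∉ closure(V). Then Y is locally connected at p⁺; that is, every neighborhood of p⁺ contains a connected open neighborhood of p⁺ (namely hⁿ(V) for some n ∈ ℕ). -/
/-- If `h` is a homeomorphism of `Y` with north–south dynamics with attracting
fixed point `p⁺` and repelling fixed point `p⁻`, and `V` is a nonempty connected open set with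
`p⁺ ∈ V` and `p⁻ ∉ closure V`, then `Y` is locally connected at `p⁺`: every neighborhood of
`p⁺` contains a connected open neighborhood of `p⁺`, namely `hⁿ(V)` for some `n`. -/
theorem locally_connected_of_north_south {Y : Type*} [TopologicalSpace Y] (h : Y ≃ₜ Y)
    (pPlus pMinus : Y) (hne : pPlus ≠ pMinus)
    (hfixPlus : h pPlus = pPlus) (hfixMinus : h pMinus = pMinus)
    (hNS : ∀ U : Set Y, IsOpen U → pPlus ∈ U → ∀ W : Set Y, IsOpen W → pMinus ∈ W →
      ∃ N : ℕ, ∀ n ≥ N, (⇑h)^[n] '' Wᶜ ⊆ U)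
    (V : Set Y) (hVne : V.Nonempty) (hVconn : IsConnected V) (hV : IsOpen V)
    (hpV : pPlus ∈ V) (hpM : pMinus ∉ closure V) :
    ∀ U ∈ nhds pPlus, ∃ n : ℕ, IsOpen ((⇑h)^[n] '' V) ∧ pPlus ∈ (⇑h)^[n] '' V ∧
      IsConnected ((⇑h)^[n] '' V) ∧ (⇑h)^[n] '' V ⊆ U := by
  intro U hU
  obtain ⟨U', hU'U, hU'o, hpU'⟩ := mem_nhds_iff.mp hU
  obtain ⟨N, hN⟩ := hNS U' hU'o hpU' (closure V)ᶜ isClosed_closure.isOpen_compl hpM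
  refine ⟨N, ?_, ⟨pPlus, hpV, Function.iterate_fixed hfixPlus N⟩,
    hVconn.image _ (h.continuous.iterate N).continuousOn, ?_⟩
  · clear hN
    induction N with
    | zero => simpa using hV
    | succ k ih =>
      rw [Function.iterate_succ', Set.image_comp]
      exact h.isOpenMap _ ih
  · refine subset_trans (Set.image_mono ?_) ((hN N le_rfl).trans hU'U)
    rw [compl_compl]
    exact subset_closure
end

section
/- Let n ≥ 1, let Y be a compact metric space, and let G be a group acting on Y by homeomorphisms such that the action gives Y a topological fractal structure. Suppose Y contains a closed subset U with nonempty interior such that U (with the subspace topology) is homeomorphic to the closed unit ball in Euclidean n-space. Then Y is homeomorphic to the n-sphere, i.e., to the unit sphere in Euclidean (n+1)-space. -/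
open Pointwise



section helpers
open Set Metric Pointwise
set_option linter.unusedSectionVars false
variable {E : Type*} [NormedAddCommGroup E] [NormedSpace ℝ E] {Y : Type*} [TopologicalSpace Y]
  [T2Space Y]

/-- extension by the identity -/
lemma extend_homeo [ProperSpace E] (f : E → Y) (hf : Topology.IsOpenEmbedding f) (T : E ≃ₜ E) (c : E) (R : ℝ)
    (hT : ∀ x, x ∉ closedBall c R → T x = x) :
    ∃ Θ : Y ≃ₜ Y, (∀ x, Θ (f x) = f (T x)) ∧ ∀ y, y ∉ range f → Θ y = y := by
  have key : ∀ T : E ≃ₜ E, (∀ x, x ∉ closedBall c R → T x = x) →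
      ∃ g : Y → Y, Continuous g ∧ (∀ x, g (f x) = f (T x)) ∧ ∀ y, y ∉ range f → g y = y := by
    intro T hT
    have h1 : ∀ x, Function.extend f (f ∘ T) id (f x) = f (T x) := fun x =>
      hf.injective.extend_apply _ _ _
    have h2 : ∀ y, y ∉ range f → Function.extend f (f ∘ T) id y = y := fun y hy =>
      Function.extend_apply' _ _ _ (by simpa using hy)
    refine ⟨_, ?_, h1, h2⟩
    rw [continuous_iff_continuousAt]
    intro y
    by_cases hy : y ∈ range f
    · obtain ⟨x, rfl⟩ := hy
      rw [← hf.continuousAt_iff]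
      have : Function.extend f (f ∘ T) id ∘ f = f ∘ T := funext h1
      rw [this]
      exact (hf.continuous.comp T.continuous).continuousAt
    · have hK : IsClosed (f '' closedBall c R) :=
        ((isCompact_closedBall c R).image hf.continuous).isClosed
      have hyK : y ∈ (f '' closedBall c R)ᶜ := fun ⟨x, _, hx⟩ => hy ⟨x, hx⟩
      have : Function.extend f (f ∘ T) id =ᶠ[nhds y] id := by
        filter_upwards [hK.isOpen_compl.mem_nhds hyK] with z hz
        by_cases hzr : z ∈ range f
        · obtain ⟨x, rfl⟩ := hzr
          rw [h1, hT x (fun h => hz ⟨x, h, rfl⟩)]; rfl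
        · exact h2 z hzr
      exact continuousAt_id.congr this.symm
  have hT' : ∀ x, x ∉ closedBall c R → T.symm x = x := by
    intro x hx
    rw [T.symm_apply_eq, hT x hx]
  obtain ⟨g, gc, g1, g2⟩ := key T hT
  obtain ⟨k, kc, k1, k2⟩ := key T.symm hT'
  refine ⟨⟨⟨g, k, fun y => ?_, fun y => ?_⟩, gc, kc⟩, g1, g2⟩
  · by_cases hy : y ∈ range f
    · obtain ⟨x, rfl⟩ := hy
      simp [g1, k1]
    · rw [g2 y hy, k2 y hy]
  · by_cases hy : y ∈ range f
    · obtain ⟨x, rfl⟩ := hy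
      simp [g1, k1]
    · rw [k2 y hy, g2 y hy]

lemma kappa (a b R S : ℝ) (hab : a < b) (hbR : b < R) (hRS : R < S) :
    ∃ κ : ℝ ≃o ℝ, (∀ t ≤ a, κ t = t) ∧ (∀ t, S ≤ t → κ t = t) ∧ κ b = R := by
  obtain ⟨m, hm⟩ : ∃ m, m = (R - a) / (b - a) := ⟨_, rfl⟩
  obtain ⟨l, hl⟩ : ∃ l, l = (S - R) / (S - b) := ⟨_, rfl⟩
  have hm1 : 1 < m := by rw [hm, one_lt_div (by linarith)]; linarith
  have hl0 : 0 < l := by rw [hl]; apply div_pos <;> linarith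
  have hl1 : l < 1 := by rw [hl, div_lt_one (by linarith)]; linarith
  have hmb : m * (b - a) = R - a := by rw [hm, div_mul_cancel₀]; linarith
  have hlb : l * (S - b) = S - R := by rw [hl, div_mul_cancel₀]; linarith
  let k : ℝ → ℝ := fun t => max t (min (a + m * (t - a)) (S + l * (t - S)))
  have hk : StrictMono k := by
    intro s t hst
    have h1 : a + m * (s - a) < a + m * (t - a) := by nlinarith
    have h2 : S + l * (s - S) < S + l * (t - S) := by nlinarith
    exact max_lt_max hst (min_lt_min h1 h2)
  have hc : Continuous k := by fun_prop
  have hla : ∀ t ≤ a, k t = t := by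
    intro t ht
    refine max_eq_left (min_le_of_left_le ?_)
    nlinarith
  have hlS : ∀ t, S ≤ t → k t = t := by
    intro t ht
    refine max_eq_left (min_le_of_right_le ?_)
    nlinarith
  have hs : Function.Surjective k := by
    refine hc.surjective ?_ ?_
    · refine Filter.tendsto_id.congr' ?_
      filter_upwards [Filter.eventually_ge_atTop S] with t ht using (hlS t ht).symm
    · refine Filter.tendsto_id.congr' ?_
      filter_upwards [Filter.eventually_le_atBot a] with t ht using (hla t ht).symm
  refine ⟨hk.orderIsoOfSurjective k hs, hla, hlS, ?_⟩
  show max b (min (a + m * (b - a)) (S + l * (b - S))) = R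
  have : l * (b - S) = R - S := by linarith
  rw [hmb, this, min_eq_left (by linarith), max_eq_right (by linarith)]; ring

lemma radial (a : ℝ) (ha : 0 < a) (κ : ℝ ≃o ℝ) (hκ : ∀ t ≤ a, κ t = t) :
    ∃ T : E ≃ₜ E, ∀ x, T x = (κ ‖x‖ / ‖x‖) • x ∧ ‖T x‖ = κ ‖x‖ := by
  have norm_eq : ∀ κ : ℝ ≃o ℝ, (∀ t ≤ a, κ t = t) → ∀ x : E, ‖(κ ‖x‖ / ‖x‖) • x‖ = κ ‖x‖ := by
    intro κ hκ x
    by_cases hx : x = 0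
    · simp [hx, hκ 0 ha.le]
    · have h0 : 0 ≤ κ ‖x‖ := by
        rw [← hκ 0 ha.le]; exact κ.monotone (norm_nonneg x)
      have : ‖x‖ ≠ 0 := norm_ne_zero_iff.2 hx
      rw [norm_smul, Real.norm_of_nonneg (by positivity), div_mul_cancel₀ _ this]
  have cont : ∀ κ : ℝ ≃o ℝ, (∀ t ≤ a, κ t = t) → Continuous fun x : E => (κ ‖x‖ / ‖x‖) • x := by
    intro κ hκ
    rw [continuous_iff_continuousAt]
    intro x
    by_cases hx : x = 0
    · subst hx
      refine continuousAt_id.congr ?_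
      filter_upwards [ball_mem_nhds (0 : E) ha] with y hy
      by_cases hy0 : y = 0
      · simp [hy0]
      · rw [hκ _ (by simpa using (mem_ball_zero_iff.1 hy).le), div_self (norm_ne_zero_iff.2 hy0)]
        simp
    · have : ‖x‖ ≠ 0 := norm_ne_zero_iff.2 hx
      have h2 : ContinuousAt (fun x : E => κ ‖x‖) x :=
        (κ.continuous.comp continuous_norm).continuousAt
      exact (h2.div continuous_norm.continuousAt this).smul continuousAt_id
  have inv : ∀ κ : ℝ ≃o ℝ, (∀ t ≤ a, κ t = t) → ∀ x : E,
      (κ.symm ‖(κ ‖x‖ / ‖x‖) • x‖ / ‖(κ ‖x‖ / ‖x‖) • x‖) • ((κ ‖x‖ / ‖x‖) • x) = x := by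
    intro κ hκ x
    rw [norm_eq κ hκ]
    by_cases hx : x = 0
    · simp [hx]
    · have h1 : 0 < ‖x‖ := norm_pos_iff.2 hx
      have h0 : 0 < κ ‖x‖ := by
        rw [← hκ 0 ha.le]; exact κ.strictMono h1
      rw [smul_smul, κ.symm_apply_apply]
      have : ‖x‖ / κ ‖x‖ * (κ ‖x‖ / ‖x‖) = 1 := by field_simp
      rw [this, one_smul]
  have hs : ∀ t ≤ a, κ.symm t = t := fun t ht => by
    rw [κ.symm_apply_eq, hκ t ht]
  exact ⟨⟨⟨fun x => (κ ‖x‖ / ‖x‖) • x, fun x => (κ.symm ‖x‖ / ‖x‖) • x, inv κ hκ,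
    fun x => inv κ.symm hs x⟩, cont κ hκ, cont κ.symm hs⟩,
    fun x => ⟨rfl, norm_eq κ hκ x⟩⟩

lemma stretch [ProperSpace E] (f : E → Y) (hf : Topology.IsOpenEmbedding f) (c : E) (a b R S : ℝ)
    (ha : 0 < a) (hab : a < b) (hbR : b < R) (hRS : R < S) :
    ∃ Θ : Y ≃ₜ Y, (∀ y ∈ f '' closedBall c a, Θ y = y) ∧ (∀ y, y ∉ f '' ball c S → Θ y = y) ∧
      ∀ y ∈ f '' closedBall c R, Θ.symm y ∈ f '' closedBall c b := by
  obtain ⟨κ, k1, k2, k3⟩ := kappa a b R S hab hbR hRS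
  obtain ⟨T, hT⟩ := radial (E := E) a ha κ k1
  let T' : E ≃ₜ E := (Homeomorph.subRight c).trans (T.trans (Homeomorph.addRight c))
  have hT' : ∀ x, T' x = T (x - c) + c := fun x => rfl
  have fixd : ∀ x, κ ‖x - c‖ = ‖x - c‖ → T' x = x := by
    intro x h
    rw [hT', (hT _).1, h]
    by_cases hx : x - c = 0
    · rw [hx]; simp [sub_eq_zero.1 hx]
    · rw [div_self (norm_ne_zero_iff.2 hx)]; simp
  obtain ⟨Θ, h1, h2⟩ := extend_homeo f hf T' c S (fun x hx => by
    apply fixd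
    apply k2
    rw [mem_closedBall_iff_norm] at hx; linarith)
  refine ⟨Θ, ?_, ?_, ?_⟩
  · rintro _ ⟨x, hx, rfl⟩
    rw [h1, fixd x (k1 _ (mem_closedBall_iff_norm.1 hx))]
  · intro y hy
    by_cases hyr : y ∈ range f
    · obtain ⟨x, rfl⟩ := hyr
      rw [h1, fixd x (k2 _ ?_)]
      by_contra h
      exact hy ⟨x, mem_ball_iff_norm.2 (not_le.1 h), rfl⟩
    · exact h2 y hyr
  · rintro _ ⟨x, hx, rfl⟩
    refine ⟨T'.symm x, ?_, ?_⟩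
    · rw [mem_closedBall_iff_norm] at hx ⊢
      have h3 := (hT (T'.symm x - c)).2
      have h4 : T (T'.symm x - c) = x - c := by
        rw [eq_sub_iff_add_eq, ← hT', T'.apply_symm_apply]
      rw [h4] at h3
      rw [← κ.le_iff_le, ← h3, k3]; exact hx
    · rw [Homeomorph.eq_symm_apply, h1, T'.apply_symm_apply]

lemma push [ProperSpace E] (f : E → Y) (hf : Topology.IsOpenEmbedding f) (v : E) (hv : ‖v‖ < 1) :
    ∃ Θ : Y ≃ₜ Y, Θ (f 0) = f v ∧ ∀ y, y ∉ f '' ball 0 1 → Θ y = y := by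
  let F : E → E := fun x => x + (max 0 (1 - ‖x‖)) • v
  have hF : ApproximatesLinearOn F ((ContinuousLinearEquiv.refl ℝ E : E ≃L[ℝ] E) : E →L[ℝ] E) univ ‖v‖₊ := by
    intro x _ y _
    have : F x - F y - (x - y) = (max 0 (1 - ‖x‖) - max 0 (1 - ‖y‖)) • v := by
      simp only [F, sub_smul]; abel
    simp only [ContinuousLinearEquiv.coe_refl, ContinuousLinearMap.coe_id', id_eq]
    rw [this, norm_smul, mul_comm, coe_nnnorm]
    gcongr
    rw [Real.norm_eq_abs]
    refine (abs_max_sub_max_le_max _ _ _ _).trans ?_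
    refine max_le (by simp) ?_
    rw [sub_sub_sub_cancel_left, abs_sub_comm]
    exact abs_norm_sub_norm_le x y
  have hc : Subsingleton E ∨ ‖v‖₊ < ‖(((ContinuousLinearEquiv.refl ℝ E).symm : E ≃L[ℝ] E) : E →L[ℝ] E)‖₊⁻¹ := by
    rcases subsingleton_or_nontrivial E with h | h
    · exact Or.inl h
    · right
      have : ‖(((ContinuousLinearEquiv.refl ℝ E).symm : E ≃L[ℝ] E) : E →L[ℝ] E)‖₊ = 1 := by
        simp
      rw [this, inv_one, ← NNReal.coe_lt_coe]
      simpa using hv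
  let T : E ≃ₜ E := hF.toHomeomorph F hc
  have hT : ∀ x, T x = F x := fun x => rfl
  have fixd : ∀ x, 1 ≤ ‖x‖ → T x = x := by
    intro x hx
    rw [hT]
    simp only [F]
    rw [max_eq_left (by linarith)]; simp
  obtain ⟨Θ, h1, h2⟩ := extend_homeo f hf T 0 1 (fun x hx => by
    apply fixd
    rw [mem_closedBall_zero_iff] at hx; linarith)
  refine ⟨Θ, ?_, ?_⟩
  · rw [h1, hT]; simp [F]
  · intro y hy
    by_cases hyr : y ∈ range f
    · obtain ⟨x, rfl⟩ := hyr
      rw [h1, fixd x]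
      by_contra h
      exact hy ⟨x, mem_ball_zero_iff.2 (not_le.1 h), rfl⟩
    · exact h2 y hyr

/-- Brown stretching step. -/
lemma brown [ProperSpace E] (p : Y)
    (cells : ∀ N : Set Y, IsOpen N → p ∈ N → ∃ f : E → Y, Topology.IsOpenEmbedding f ∧
      p ∉ range f ∧ Nᶜ ⊆ range f) [CompactSpace Y]
    (h : E → Y) (hh : Topology.IsOpenEmbedding h) (hp : p ∉ range h) (N : Set Y) (hN : IsOpen N)
    (hpN : p ∈ N) (r s : ℝ) (hr : 0 < r) (hrs : r < s) :
    ∃ h' : E → Y, Topology.IsOpenEmbedding h' ∧ p ∉ range h' ∧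
      (∀ x ∈ closedBall 0 r, h' x = h x) ∧ Nᶜ ⊆ h' '' ball 0 s := by
  have hKc : IsClosed (h '' closedBall 0 s) :=
    ((isCompact_closedBall _ _).image hh.continuous).isClosed
  obtain ⟨f, hf, hpf, hNf⟩ := cells (N ∩ (h '' closedBall 0 s)ᶜ) (hN.inter hKc.isOpen_compl)
    ⟨hpN, fun ⟨x, _, hx⟩ => hp ⟨x, hx⟩⟩
  set K : Set Y := (N ∩ (h '' closedBall 0 s)ᶜ)ᶜ with hK
  have hKcl : IsClosed K := (hN.inter hKc.isOpen_compl).isClosed_compl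
  have hhK : h '' closedBall 0 s ⊆ K := by
    intro y hy hy'; exact hy'.2 hy
  have hNK : Nᶜ ⊆ K := fun y hy hy' => hy hy'.1
  obtain ⟨c, hc⟩ : ∃ c, f c = h 0 := hNf (hhK ⟨0, by simp; linarith, rfl⟩)
  -- the preimage of K is bounded
  have hKf : IsCompact (f ⁻¹' K) := hf.isInducing.isCompact_preimage_iff hNf |>.2 hKcl.isCompact
  obtain ⟨R₀, hR₀⟩ := hKf.isBounded.subset_closedBall c
  -- small ball
  have hb : f ⁻¹' (h '' ball 0 s) ∈ nhds c := by
    refine ((hh.isOpenMap _ isOpen_ball).preimage hf.continuous).mem_nhds ?_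
    exact ⟨0, by simp; linarith, hc.symm⟩
  obtain ⟨b, hb0, hb⟩ := Metric.nhds_basis_closedBall.mem_iff.1 hb
  have hbR : b < max R₀ (b + 1) := lt_max_of_lt_right (by linarith)
  obtain ⟨Θ, t1, t2, t3⟩ := stretch f hf c (b/2) b (max R₀ (b+1)) (max R₀ (b+1) + 1) (by linarith)
    (by linarith) hbR (by linarith)
  have hd : h ⁻¹' (f '' ball c (b/2)) ∈ nhds 0 := by
    refine ((hf.isOpenMap _ isOpen_ball).preimage hh.continuous).mem_nhds ?_
    exact ⟨c, by simp; linarith, hc⟩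
  obtain ⟨δ', hd0', hd'⟩ := Metric.nhds_basis_closedBall.mem_iff.1 hd
  obtain ⟨δ, hd0, hdr, hd⟩ : ∃ δ, 0 < δ ∧ δ < r ∧ closedBall 0 δ ⊆ h ⁻¹' (f '' ball c (b/2)) := by
    refine ⟨min δ' (r/2), lt_min hd0' (by linarith), min_lt_of_right_lt (by linarith), ?_⟩
    exact (closedBall_subset_closedBall (min_le_left _ _)).trans hd'
  obtain ⟨A, a1, a2, a3⟩ := stretch h hh 0 (δ/2) δ r s (by linarith) (by linarith) hdr hrs
  have a2s : ∀ y, y ∉ h '' ball 0 s → A.symm y = y := fun y hy => by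
    rw [A.symm_apply_eq, a2 y hy]
  have hA : ∀ y, y ∈ h '' ball 0 s → A y ∈ h '' ball 0 s := by
    intro y hy
    by_contra hn
    have := a2s _ hn
    rw [A.symm_apply_apply] at this
    exact hn (this ▸ hy)
  have hAs : ∀ y, y ∈ h '' ball 0 s → A.symm y ∈ h '' ball 0 s := by
    intro y hy
    by_contra hn
    have := a2 _ hn
    rw [A.apply_symm_apply] at this
    exact hn (this ▸ hy)
  have hpA : A p = p := a2 p fun ⟨x, _, hx⟩ => hp ⟨x, hx⟩
  have hpT : Θ p = p := t2 p fun ⟨x, _, hx⟩ => hpf ⟨x, hx⟩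
  let ψ : Y ≃ₜ Y := A.symm.trans (Θ.trans A)
  have hψ : ∀ y, ψ y = A (Θ (A.symm y)) := fun y => rfl
  have hψp : ψ p = p := by
    rw [hψ, (A.symm_apply_eq).2 hpA.symm, hpT, hpA]
  refine ⟨ψ ∘ h, ψ.isOpenEmbedding.comp hh, ?_, ?_, ?_⟩
  · rintro ⟨x, hx⟩
    refine hp ⟨x, ?_⟩
    apply ψ.injective
    rw [hψp]; exact hx
  · intro x hx
    show ψ (h x) = h x
    obtain ⟨z, hz, hz'⟩ := a3 (h x) ⟨x, hx, rfl⟩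
    have : A.symm (h x) ∈ f '' closedBall c (b/2) := by
      rw [← hz']
      exact image_mono ball_subset_closedBall (hd hz)
    rw [hψ, t1 _ this, A.apply_symm_apply]
  · intro y hy
    have h1 : A.symm y ∈ K := by
      by_cases hys : y ∈ h '' ball 0 s
      · exact hhK (image_mono ball_subset_closedBall (hAs y hys))
      · rw [a2s y hys]; exact hNK hy
    have h2 : A.symm y ∈ f '' closedBall c (max R₀ (b+1)) := by
      obtain ⟨z, hz⟩ := hNf h1
      refine ⟨z, closedBall_subset_closedBall (le_max_left _ _) (hR₀ ?_), hz⟩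
      show f z ∈ K
      rw [hz]; exact h1
    obtain ⟨z, hz, hz'⟩ := t3 _ h2
    have h3 : Θ.symm (A.symm y) ∈ h '' ball 0 s := by
      rw [← hz']; exact hb hz
    obtain ⟨x, hx, hx'⟩ := hA _ h3
    refine ⟨x, hx, ?_⟩
    show ψ (h x) = y
    rw [hx', hψ]; simp


/-- the direct limit of the stretched embeddings -/
lemma limit_cell [ProperSpace E] {Y : Type*} [MetricSpace Y] [CompactSpace Y] (p : Y)
    (cells : ∀ N : Set Y, IsOpen N → p ∈ N → ∃ f : E → Y, Topology.IsOpenEmbedding f ∧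
      p ∉ range f ∧ Nᶜ ⊆ range f) :
    ∃ h : E → Y, Topology.IsOpenEmbedding h ∧ range h = {p}ᶜ := by
  obtain ⟨f₀, hf₀, hpf₀, -⟩ := cells univ isOpen_univ trivial
  let P := {h : E → Y // Topology.IsOpenEmbedding h ∧ p ∉ range h}
  have step : ∀ (k : ℕ) (h : P), ∃ h' : P, (∀ x ∈ closedBall (0 : E) (k + 1), h'.1 x = h.1 x) ∧
      (ball p (1 / ((k : ℝ) + 1)))ᶜ ⊆ h'.1 '' ball 0 (k + 2) := by
    intro k h
    obtain ⟨h', h1, h2, h3, h4⟩ := brown p cells h.1 h.2.1 h.2.2 (ball p (1 / ((k : ℝ) + 1)))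
      isOpen_ball (mem_ball_self (by positivity)) (k + 1) (k + 2) (by positivity) (by linarith)
    exact ⟨⟨h', h1, h2⟩, h3, h4⟩
  choose nxt n1 n2 using step
  let H : ℕ → P := fun k => Nat.rec ⟨f₀, hf₀, hpf₀⟩ nxt k
  have Hs : ∀ k, H (k + 1) = nxt k (H k) := fun k => rfl
  have agree : ∀ k m : ℕ, k ≤ m → ∀ x ∈ closedBall (0 : E) (k + 1), (H m).1 x = (H k).1 x := by
    intro k m hkm
    induction m, hkm using Nat.le_induction with
    | base => intro x _; rfl
    | succ m hm ih =>
      intro x hx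
      rw [Hs, n1 m _ x, ih x hx]
      refine closedBall_subset_closedBall ?_ hx
      have : (k : ℝ) ≤ m := by exact_mod_cast hm
      linarith
  let h : E → Y := fun x => (H ⌈‖x‖⌉₊).1 x
  have hH : ∀ k : ℕ, ∀ x ∈ closedBall (0 : E) (k + 1), h x = (H k).1 x := by
    intro k x hx
    have hx' : x ∈ closedBall (0 : E) ((⌈‖x‖⌉₊ : ℝ) + 1) := by
      rw [mem_closedBall_zero_iff]
      linarith [Nat.le_ceil ‖x‖]
    rcases le_total k ⌈‖x‖⌉₊ with hk | hk
    · exact agree _ _ hk x hx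
    · exact (agree _ _ hk x hx').symm
  have loc : ∀ x : E, ∃ k : ℕ, x ∈ ball (0 : E) (k + 1) := by
    intro x
    obtain ⟨k, hk⟩ := exists_nat_gt ‖x‖
    exact ⟨k, by rw [mem_ball_zero_iff]; linarith⟩
  have ev : ∀ (k : ℕ) (x : E), x ∈ ball (0 : E) (k + 1) → h =ᶠ[nhds x] (H k).1 := by
    intro k x hx
    filter_upwards [isOpen_ball.mem_nhds hx] with z hz using hH k z (ball_subset_closedBall hz)
  refine ⟨h, Topology.IsOpenEmbedding.of_continuous_injective_isOpenMap ?_ ?_ ?_, ?_⟩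
  · rw [continuous_iff_continuousAt]
    intro x
    obtain ⟨k, hk⟩ := loc x
    exact ((H k).2.1.continuous.continuousAt).congr (ev k x hk).symm
  · intro x y hxy
    obtain ⟨k, hk⟩ := loc x
    obtain ⟨l, hl⟩ := loc y
    have hx : x ∈ closedBall (0 : E) ((max k l : ℕ) + 1) := by
      refine closedBall_subset_closedBall ?_ (ball_subset_closedBall hk)
      have : (k : ℝ) ≤ (max k l : ℕ) := by exact_mod_cast le_max_left _ _
      linarith
    have hy : y ∈ closedBall (0 : E) ((max k l : ℕ) + 1) := by
      refine closedBall_subset_closedBall ?_ (ball_subset_closedBall hl)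
      have : (l : ℝ) ≤ (max k l : ℕ) := by exact_mod_cast le_max_right _ _
      linarith
    rw [hH _ x hx, hH _ y hy] at hxy
    exact (H _).2.1.injective hxy
  · rw [isOpenMap_iff_nhds_le]
    intro x
    obtain ⟨k, hk⟩ := loc x
    rw [Filter.map_congr (ev k x hk), (ev k x hk).eq_of_nhds]
    exact (H k).2.1.isOpenMap.nhds_le x
  · ext y
    constructor
    · rintro ⟨x, rfl⟩ hx
      exact (H ⌈‖x‖⌉₊).2.2 ⟨x, hx⟩
    · intro hy
      have hd : 0 < dist y p := dist_pos.2 hy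
      obtain ⟨k, hk⟩ := exists_nat_one_div_lt hd
      obtain ⟨x, hx, hxy⟩ := n2 k (H k) (show y ∈ _ by
        simp only [mem_compl_iff, mem_ball, not_lt]; exact hk.le)
      refine ⟨x, ?_⟩
      rw [hH (k + 1) x, Hs, hxy]
      refine ball_subset_closedBall ?_
      convert hx using 2
      push_cast; ring

/-- an initial chart -/
lemma initial_chart (U : Set Y) (hUint : (interior U).Nonempty)
    (φ : U ≃ₜ closedBall (0 : E) 1) : ∃ e : E → Y, Topology.IsOpenEmbedding e := by
  obtain ⟨y₀, hy₀⟩ := hUint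
  have hW : IsOpen {x : closedBall (0 : E) 1 | (φ.symm x : Y) ∈ interior U} :=
    isOpen_interior.preimage (continuous_subtype_val.comp φ.symm.continuous)
  obtain ⟨O, hO, hOW⟩ := isOpen_induced_iff.1 hW
  have hw : (φ ⟨y₀, interior_subset hy₀⟩ : E) ∈ O := by
    have : φ ⟨y₀, interior_subset hy₀⟩ ∈ (Subtype.val ⁻¹' O : Set (closedBall (0 : E) 1)) := by
      rw [hOW]; simpa using hy₀
    exact this
  have hcl : (φ ⟨y₀, interior_subset hy₀⟩ : E) ∈ closure (ball (0 : E) 1) := by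
    rw [closure_ball _ one_ne_zero]; exact Subtype.property _
  obtain ⟨x₀, hx₀O, hx₀⟩ := mem_closure_iff.1 hcl O hO hw
  obtain ⟨ρ, hρ, hball⟩ := Metric.isOpen_iff.1 (hO.inter isOpen_ball) x₀ ⟨hx₀O, hx₀⟩
  let u := OpenPartialHomeomorph.univBall (E := E) x₀ ρ
  have hu : Topology.IsOpenEmbedding u :=
    u.isOpenEmbedding (OpenPartialHomeomorph.univBall_source x₀ ρ)
  have hur : ∀ x, u x ∈ O ∩ ball 0 1 := by
    intro x
    apply hball
    rw [← OpenPartialHomeomorph.univBall_target x₀ hρ]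
    exact u.map_source (by simp [u, OpenPartialHomeomorph.univBall_source])
  let v : E → closedBall (0 : E) 1 := fun x => ⟨u x, ball_subset_closedBall (hur x).2⟩
  have hv : Topology.IsOpenEmbedding v := by
    refine Topology.IsOpenEmbedding.of_continuous_injective_isOpenMap ?_ ?_ ?_
    · exact hu.continuous.subtype_mk _
    · intro x y hxy
      exact hu.injective (congrArg Subtype.val hxy)
    · intro S hS
      have : v '' S = Subtype.val ⁻¹' (u '' S) := by
        ext z
        constructor
        · rintro ⟨x, hx, rfl⟩; exact ⟨x, hx, rfl⟩
        · rintro ⟨x, hx, hz⟩; exact ⟨x, hx, Subtype.ext hz⟩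
      rw [this]
      exact (hu.isOpenMap _ hS).preimage continuous_subtype_val
  have hφv : Topology.IsOpenEmbedding (φ.symm ∘ v) := φ.symm.isOpenEmbedding.comp hv
  have hint : ∀ x, ((φ.symm (v x) : U) : Y) ∈ interior U := by
    intro x
    have : v x ∈ (Subtype.val ⁻¹' O : Set (closedBall (0 : E) 1)) := (hur x).1
    rw [hOW] at this
    exact this
  refine ⟨fun x => (φ.symm (v x) : Y), Topology.IsOpenEmbedding.of_continuous_injective_isOpenMap
    (continuous_subtype_val.comp hφv.continuous)
    (Subtype.val_injective.comp hφv.injective) ?_⟩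
  intro S hS
  obtain ⟨Q, hQ, hQS⟩ := isOpen_induced_iff.1 (hφv.isOpenMap S hS)
  have : (fun x => (φ.symm (v x) : Y)) '' S = Q ∩ interior U := by
    ext y
    constructor
    · rintro ⟨x, hx, rfl⟩
      refine ⟨?_, hint x⟩
      have : (φ.symm ∘ v) x ∈ (Subtype.val ⁻¹' Q : Set U) := by rw [hQS]; exact ⟨x, hx, rfl⟩
      exact this
    · rintro ⟨hyQ, hyU⟩
      have : (⟨y, interior_subset hyU⟩ : U) ∈ (Subtype.val ⁻¹' Q : Set U) := hyQ
      rw [hQS] at this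
      obtain ⟨x, hx, hxy⟩ := this
      exact ⟨x, hx, congrArg Subtype.val hxy⟩
  rw [this]
  exact hQ.inter isOpen_interior

lemma cells_of_fractal [ProperSpace E] [Nontrivial E] {G : Type*} [Group G] [MulAction G Y]
    (hcont : ∀ g : G, Continuous fun y : Y => g • y)
    (hfractal : ∀ F : Set Y, IsClosed F → F ≠ Set.univ →
      ∀ U : Set Y, IsOpen U → U.Nonempty → ∃ g : G, g • F ⊆ U)
    (e : E → Y) (he : Topology.IsOpenEmbedding e) (p : Y) (N : Set Y) (hN : IsOpen N)
    (hpN : p ∈ N) : ∃ f : E → Y, Topology.IsOpenEmbedding f ∧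
      p ∉ range f ∧ Nᶜ ⊆ range f := by
  let L : G → Y ≃ₜ Y := fun g => ⟨MulAction.toPerm g, hcont g, hcont g⁻¹⟩
  have hL : ∀ g y, L g y = g • y := fun _ _ => rfl
  -- a chart at `p`
  have hne : ({p} : Set Y) ≠ univ := by
    intro h
    obtain ⟨x, y, hxy⟩ := exists_pair_ne E
    apply hxy
    apply he.injective
    have h1 : e x ∈ ({p} : Set Y) := h ▸ mem_univ _
    have h2 : e y ∈ ({p} : Set Y) := h ▸ mem_univ _
    rw [mem_singleton_iff.1 h1, mem_singleton_iff.1 h2]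
  obtain ⟨g, hg⟩ := hfractal {p} isClosed_singleton hne (range e) he.isOpen_range (range_nonempty e)
  obtain ⟨x₀, hx₀⟩ : g • p ∈ range e := hg (smul_mem_smul_set (mem_singleton p))
  let e₁ : E → Y := fun x => L g⁻¹ (e (x + x₀))
  have he₁ : Topology.IsOpenEmbedding e₁ :=
    (L g⁻¹).isOpenEmbedding.comp (he.comp (Homeomorph.addRight x₀).isOpenEmbedding)
  have he₁0 : e₁ 0 = p := by simp [e₁, hL, hx₀]
  obtain ⟨ε, hε, hεN⟩ := Metric.mem_nhds_iff.1
    ((hN.preimage he₁.continuous).mem_nhds (show e₁ 0 ∈ N by rwa [he₁0]))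
  let e₂ : E → Y := fun x => e₁ (ε • x)
  have he₂ : Topology.IsOpenEmbedding e₂ :=
    he₁.comp (Homeomorph.smulOfNeZero ε hε.ne').isOpenEmbedding
  have he₂0 : e₂ 0 = p := by simp [e₂, he₁0]
  have he₂N : e₂ '' ball 0 1 ⊆ N := by
    rintro _ ⟨x, hx, rfl⟩
    refine hεN ?_
    rw [mem_ball_zero_iff] at hx ⊢
    rw [norm_smul, Real.norm_of_nonneg hε.le]
    nlinarith
  -- a small chart
  let u := OpenPartialHomeomorph.univBall (E := E) (0 : E) 1
  have hu : Topology.IsOpenEmbedding u :=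
    u.isOpenEmbedding (OpenPartialHomeomorph.univBall_source _ _)
  have hur : ∀ x, u x ∈ ball (0 : E) 1 := by
    intro x
    rw [← OpenPartialHomeomorph.univBall_target (0 : E) one_pos]
    exact u.map_source (by simp [u, OpenPartialHomeomorph.univBall_source])
  obtain ⟨z, hz⟩ := NormedSpace.exists_lt_norm ℝ E 1
  have hzr : e z ∉ range (e ∘ u) := by
    rintro ⟨x, hx⟩
    have h1 := hur x
    rw [he.injective hx, mem_ball_zero_iff] at h1
    linarith
  have heu := he.comp hu
  obtain ⟨k, hk⟩ := hfractal (e₂ '' ball 0 1)ᶜ (he₂.isOpenMap _ isOpen_ball).isClosed_compl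
    (by
      rw [Ne, compl_univ_iff]
      exact ((nonempty_ball.2 one_pos).image e₂).ne_empty)
    (range (e ∘ u)) heu.isOpen_range (range_nonempty _)
  let f₀ : E → Y := L k⁻¹ ∘ (e ∘ u)
  have hf₀ : Topology.IsOpenEmbedding f₀ := (L k⁻¹).isOpenEmbedding.comp heu
  have hcov : (e₂ '' ball 0 1)ᶜ ⊆ range f₀ := by
    intro y hy
    obtain ⟨x, hx⟩ := hk (smul_mem_smul_set hy)
    refine ⟨x, ?_⟩
    simp only [f₀, Function.comp_apply, hL] at hx ⊢
    rw [hx, inv_smul_smul]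
  have hp' : k⁻¹ • e z ∉ range f₀ := by
    rintro ⟨x, hx⟩
    refine hzr ⟨x, ?_⟩
    exact (L k⁻¹).injective hx
  obtain ⟨v, hv, hvz⟩ : k⁻¹ • e z ∈ e₂ '' ball 0 1 := by
    by_contra h
    exact hp' (hcov h)
  obtain ⟨Θ, t1, t2⟩ := push e₂ he₂ v (mem_ball_zero_iff.1 hv)
  refine ⟨Θ.symm ∘ f₀, Θ.symm.isOpenEmbedding.comp hf₀, ?_, ?_⟩
  · rintro ⟨x, hx⟩
    refine hp' ⟨x, ?_⟩
    rw [← hvz, ← t1, he₂0, ← hx]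
    simp
  · intro y hy
    have hy' : y ∉ e₂ '' ball 0 1 := fun h => hy (he₂N h)
    obtain ⟨x, hx⟩ := hcov hy'
    refine ⟨x, ?_⟩
    rw [Function.comp_apply, hx, Θ.symm_apply_eq, t2 y hy']

end helpers

/-- Let `n ≥ 1`, let `Y` be a compact metric space, and let a group `G` act on
`Y` by homeomorphisms with a topological fractal structure. If `Y` contains a closed subset
`U` with nonempty interior which is homeomorphic to the closed unit ball in Euclidean
`n`-space, then `Y` is homeomorphic to the `n`-sphere. -/
theorem sphere_of_fractal_ball {G Y : Type*} [Group G] [MetricSpace Y] [CompactSpace Y]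
    [MulAction G Y] (n : ℕ) (hn : 1 ≤ n)
    (hcont : ∀ g : G, Continuous fun y : Y => g • y)
    (hfractal : ∀ F : Set Y, IsClosed F → F ≠ Set.univ →
      ∀ U : Set Y, IsOpen U → U.Nonempty → ∃ g : G, g • F ⊆ U)
    (U : Set Y) (hUclosed : IsClosed U) (hUint : (interior U).Nonempty)
    (hUball : Nonempty (U ≃ₜ (Metric.closedBall (0 : EuclideanSpace ℝ (Fin n)) 1))) :
    Nonempty (Y ≃ₜ (Metric.sphere (0 : EuclideanSpace ℝ (Fin (n + 1))) 1)) := by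
  obtain ⟨φ⟩ := hUball
  have : Nonempty (Fin n) := ⟨⟨0, hn⟩⟩
  obtain ⟨e, he⟩ := initial_chart U hUint φ
  obtain ⟨h, hh, hr⟩ := limit_cell (e 0)
    (fun N hN hpN => cells_of_fractal hcont hfractal e he (e 0) N hN hpN)
  exact ⟨(OnePoint.equivOfIsEmbeddingOfRangeEq (e 0) h hh.isEmbedding hr).symm.trans
    (onePointEquivSphereOfFinrankEq (by simp))⟩
end

section
/- Let n ≥ 1, let Y be a nonempty compact metric space, and let G be a group acting on Y by homeomorphisms such that the action gives Y a topological fractal structure. Suppose Y is a topological n-manifold, i.e., every point of Y has an open neighborhood homeomorphic to an open subset of Euclidean n-space. Then Y is homeomorphic to the n-sphere, i.e., to the unit sphere in Euclidean (n+1)-space. -/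
open Topology Metric

noncomputable def radF (a b c d t : ℝ) : ℝ :=
  min t a + (c - a) / (b - a) * (max a (min t b) - a)
    + (d - c) / (d - b) * (max b (min t d) - b) + (max t d - d)

lemma radF_cont (a b c d : ℝ) : Continuous (radF a b c d) := by
  unfold radF; fun_prop

lemma radF_1 {a b c d t : ℝ} (hab : a < b) (hbd : b < d) (ht : t ≤ a) :
    radF a b c d t = t := by
  unfold radF
  rw [min_eq_left ht, min_eq_left (by linarith), max_eq_left ht, min_eq_left (by linarith),
    max_eq_left (by linarith : t ≤ b), max_eq_right (by linarith)]
  ring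

lemma radF_2 {a b c d t : ℝ} (hbd : b < d) (ht : a ≤ t) (ht' : t ≤ b) :
    radF a b c d t = a + (c - a) / (b - a) * (t - a) := by
  unfold radF
  rw [min_eq_right ht, min_eq_left ht', max_eq_right ht, min_eq_left (by linarith),
    max_eq_left (by linarith : t ≤ b), max_eq_right (by linarith)]
  ring

lemma radF_3 {a b c d t : ℝ} (hab : a < b) (ht : b ≤ t) (ht' : t ≤ d) :
    radF a b c d t = c + (d - c) / (d - b) * (t - b) := by
  unfold radF
  rw [min_eq_right (by linarith), min_eq_right ht, max_eq_right hab.le, min_eq_left ht',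
    max_eq_right ht, max_eq_right (by linarith)]
  have : b - a ≠ 0 := by linarith
  field_simp
  ring

lemma radF_4 {a b c d t : ℝ} (hab : a < b) (hbd : b < d) (ht : d ≤ t) :
    radF a b c d t = t := by
  unfold radF
  rw [min_eq_right (by linarith), min_eq_right (by linarith), max_eq_right hab.le,
    min_eq_right ht, max_eq_right hbd.le, max_eq_left (by linarith)]
  have : b - a ≠ 0 := by linarith
  have : d - b ≠ 0 := by linarith
  field_simp
  ring

lemma radF_inv {a b c d : ℝ} (hab : a < b) (hbd : b < d) (hac : a < c) (hcd : c < d) (t : ℝ) :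
    radF a c b d (radF a b c d t) = t ∧ (t ≤ b → radF a b c d t ≤ c) ∧
      (a ≤ t → a ≤ radF a b c d t) := by
  have h1 : 0 < b - a := by linarith
  have h2 : 0 < c - a := by linarith
  have h3 : 0 < d - b := by linarith
  have h4 : 0 < d - c := by linarith
  rcases le_total t a with h | h
  · rw [radF_1 hab hbd h, radF_1 hac hcd h]
    exact ⟨rfl, fun _ => by linarith, fun h => h⟩
  rcases le_total t b with h' | h'
  · rw [radF_2 hbd h h']
    have e1 : 0 ≤ (c - a) / (b - a) * (t - a) := mul_nonneg (by positivity) (by linarith)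
    have e2 : (c - a) / (b - a) * (t - a) ≤ c - a := by
      rw [div_mul_eq_mul_div, div_le_iff₀ h1]; nlinarith
    rw [radF_2 hcd (by linarith) (by linarith)]
    refine ⟨by field_simp; ring, fun _ => by linarith, fun _ => by linarith⟩
  rcases le_total t d with h'' | h''
  · rw [radF_3 hab h' h'']
    have e1 : 0 ≤ (d - c) / (d - b) * (t - b) := mul_nonneg (by positivity) (by linarith)
    have e2 : (d - c) / (d - b) * (t - b) ≤ d - c := by
      rw [div_mul_eq_mul_div, div_le_iff₀ h3]; nlinarith
    rw [radF_3 hac (by linarith) (by linarith)]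
    refine ⟨by field_simp; ring, fun h => ?_, fun _ => by linarith⟩
    have : t = b := le_antisymm h h'
    simp [this]
  · rw [radF_4 hab hbd h'', radF_4 hac hcd h'']
    exact ⟨rfl, fun _ => by linarith, fun h => h⟩

section
variable {E : Type*} [NormedAddCommGroup E] [NormedSpace ℝ E]

noncomputable def radE (a b c d : ℝ) (x : E) : E :=
  (radF a b c d (max ‖x‖ a) / max ‖x‖ a) • x

lemma radE_cont {a : ℝ} (ha : 0 < a) (b c d : ℝ) : Continuous (radE (E := E) a b c d) := by
  unfold radE
  refine Continuous.smul (Continuous.div ?_ (by fun_prop) fun x => ?_) continuous_id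
  · exact (radF_cont a b c d).comp (by fun_prop)
  · have : a ≤ max ‖x‖ a := le_max_right _ _
    linarith

lemma radE_small {a b c d : ℝ} (ha : 0 < a) (hab : a < b) (hbd : b < d) {x : E} (hx : ‖x‖ ≤ a) :
    radE a b c d x = x := by
  unfold radE
  rw [max_eq_right hx, radF_1 hab hbd le_rfl, div_self ha.ne', one_smul]

lemma radE_norm {a b c d : ℝ} (ha : 0 < a) (hab : a < b) (hbd : b < d) (hac : a < c) (hcd : c < d)
    (x : E) : ‖radE a b c d x‖ = radF a b c d ‖x‖ := by
  rcases le_total ‖x‖ a with h | h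
  · rw [radE_small ha hab hbd h, radF_1 hab hbd h]
  · unfold radE
    have := (radF_inv hab hbd hac hcd ‖x‖).2.2 h
    rw [max_eq_left h, norm_smul, Real.norm_of_nonneg (div_nonneg (by linarith) (by linarith)),
      div_mul_cancel₀]
    linarith

lemma radE_inv {a b c d : ℝ} (ha : 0 < a) (hab : a < b) (hbd : b < d) (hac : a < c) (hcd : c < d)
    (x : E) : radE a c b d (radE a b c d x) = x := by
  rcases le_total ‖x‖ a with h | h
  · rw [radE_small ha hab hbd h, radE_small ha hac hcd h]
  · have h1 := (radF_inv hab hbd hac hcd ‖x‖).2.2 h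
    have h2 := (radF_inv hab hbd hac hcd ‖x‖).1
    conv_lhs => unfold radE
    rw [show ‖(radF a b c d (max ‖x‖ a) / max ‖x‖ a) • x‖ = _ from radE_norm ha hab hbd hac hcd x,
      max_eq_left h1, h2, max_eq_left h, smul_smul, div_mul_div_cancel₀, div_self, one_smul] <;>
    linarith

lemma radE_large {a b c d : ℝ} (ha : 0 < a) (hab : a < b) (hbd : b < d) {x : E} (hx : d ≤ ‖x‖) :
    radE a b c d x = x := by
  unfold radE
  rw [max_eq_left (by linarith), radF_4 hab hbd hx, div_self (by linarith), one_smul]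

lemma radial_s9 {a b c d : ℝ} (ha : 0 < a) (hab : a < b) (hbd : b < d) (hac : a < c) (hcd : c < d) :
    ∃ h : E ≃ₜ E, (∀ x, ‖x‖ ≤ a → h x = x) ∧ (∀ x, d ≤ ‖x‖ → h x = x) ∧
      (∀ x, ‖x‖ ≤ b ↔ ‖h x‖ ≤ c) := by
  refine ⟨⟨⟨radE a b c d, radE a c b d, radE_inv ha hab hbd hac hcd, radE_inv ha hac hcd hab hbd⟩,
    radE_cont ha _ _ _, radE_cont ha _ _ _⟩, fun x => radE_small ha hab hbd,
    fun x => radE_large ha hab hbd, fun x => ?_⟩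
  show _ ↔ ‖radE a b c d x‖ ≤ c
  rw [radE_norm ha hab hbd hac hcd]
  refine ⟨(radF_inv hab hbd hac hcd ‖x‖).2.1, fun h => ?_⟩
  have := (radF_inv hac hcd hab hbd (radF a b c d ‖x‖)).2.1 h
  rwa [(radF_inv hab hbd hac hcd ‖x‖).1] at this

variable {M : Type*} [TopologicalSpace M] [T2Space M]

open Classical in
noncomputable def extH (ψ : E → M) (h : E → E) (y : M) : M :=
  if H : ∃ x, ψ x = y then ψ (h H.choose) else y

lemma extH_apply {ψ : E → M} (hψ : Function.Injective ψ) (h : E → E) (x : E) :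
    extH ψ h (ψ x) = ψ (h x) := by
  have H : ∃ x', ψ x' = ψ x := ⟨x, rfl⟩
  rw [extH, dif_pos H, hψ H.choose_spec]

lemma extH_out {ψ : E → M} (h : E → E) {y : M} (hy : y ∉ Set.range ψ) :
    extH ψ h y = y := dif_neg hy

lemma extH_cont [ProperSpace E] {ψ : E → M} (hψ : IsOpenEmbedding ψ) {h : E → E}
    (hc : Continuous h) {d : ℝ} (hd : ∀ x, d ≤ ‖x‖ → h x = x) : Continuous (extH ψ h) := by
  rw [continuous_iff_continuousAt]
  intro y
  by_cases hy : y ∈ Set.range ψ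
  · obtain ⟨x, rfl⟩ := hy
    rw [← hψ.continuousAt_iff]
    have : extH ψ h ∘ ψ = ψ ∘ h := funext fun x => extH_apply hψ.injective h x
    rw [this]
    exact (hψ.continuous.comp hc).continuousAt
  · have hK : IsClosed (ψ '' closedBall 0 d) :=
      ((isCompact_closedBall _ _).image hψ.continuous).isClosed
    have : extH ψ h =ᶠ[𝓝 y] id := by
      filter_upwards [hK.isOpen_compl.mem_nhds (x := y) (fun ⟨x, _, hx⟩ => hy ⟨x, hx⟩)] with z hz
      by_cases hz' : z ∈ Set.range ψ
      · obtain ⟨x, rfl⟩ := hz'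
        rw [extH_apply hψ.injective, hd, id]
        by_contra hx
        exact hz ⟨x, by simpa using (not_le.1 hx).le, rfl⟩
      · exact extH_out h hz'
    exact continuousAt_id.congr this.symm

lemma extH_inv {ψ : E → M} (hψ : Function.Injective ψ) {h k : E → E} (hk : ∀ x, k (h x) = x)
    (y : M) : extH ψ k (extH ψ h y) = y := by
  by_cases hy : y ∈ Set.range ψ
  · obtain ⟨x, rfl⟩ := hy
    rw [extH_apply hψ, extH_apply hψ, hk]
  · rw [extH_out h hy, extH_out k hy]

lemma extend [ProperSpace E] {ψ : E → M} (hψ : IsOpenEmbedding ψ) (h : E ≃ₜ E) {d : ℝ}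
    (hd : ∀ x, d ≤ ‖x‖ → h x = x) :
    ∃ H : M ≃ₜ M, (∀ x, H (ψ x) = ψ (h x)) ∧ ∀ y, y ∉ Set.range ψ → H y = y := by
  have hd' : ∀ x, d ≤ ‖x‖ → h.symm x = x := fun x hx => by
    rw [Homeomorph.symm_apply_eq, hd x hx]
  exact ⟨⟨⟨extH ψ h, extH ψ h.symm, extH_inv hψ.injective (by simp),
    extH_inv hψ.injective (by simp)⟩, extH_cont hψ h.continuous hd,
    extH_cont hψ h.symm.continuous hd'⟩, extH_apply hψ.injective h, fun y => extH_out h⟩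

lemma step [ProperSpace E]
    (hM : ∀ K : Set M, IsCompact K → ∃ ψ : E → M, IsOpenEmbedding ψ ∧ K ⊆ Set.range ψ)
    {φ : E → M} (hφ : IsOpenEmbedding φ) {r R : ℝ} (hr : 0 < r) (hrR : r < R) {K : Set M}
    (hK : IsCompact K) :
    ∃ φ' : E → M, IsOpenEmbedding φ' ∧ (∀ x, ‖x‖ ≤ r → φ' x = φ x) ∧ K ⊆ φ' '' ball 0 R := by
  have hK' : IsCompact (K ∪ φ '' closedBall 0 R) :=
    hK.union ((isCompact_closedBall _ _).image hφ.continuous)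
  obtain ⟨ψ, hψ, hKψ, h0⟩ : ∃ ψ : E → M, IsOpenEmbedding ψ ∧
      K ∪ φ '' closedBall 0 R ⊆ Set.range ψ ∧ ψ 0 = φ 0 := by
    obtain ⟨ψ, hψ, hKψ⟩ := hM _ hK'
    obtain ⟨a, ha⟩ := hKψ (Or.inr ⟨0, by simp; linarith, rfl⟩)
    refine ⟨ψ ∘ Homeomorph.addLeft a, hψ.comp (Homeomorph.isOpenEmbedding _), ?_, by simpa using ha⟩
    rwa [(Homeomorph.addLeft a).surjective.range_comp]
  obtain ⟨ε', hε', hε⟩ : ∃ ε' > 0, ball (0 : E) ε' ⊆ ψ ⁻¹' (φ '' ball 0 R) := by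
    apply Metric.mem_nhds_iff.1
    refine ((hφ.isOpenMap _ isOpen_ball).preimage hψ.continuous).mem_nhds ?_
    exact ⟨0, by simp; linarith, h0.symm⟩
  set ε := ε' / 3
  have hεpos : 0 < ε := by positivity
  obtain ⟨δ', hδ', hδ⟩ : ∃ δ' > 0, ball (0 : E) δ' ⊆ φ ⁻¹' (ψ '' ball 0 ε) := by
    apply Metric.mem_nhds_iff.1
    refine ((hψ.isOpenMap _ isOpen_ball).preimage hφ.continuous).mem_nhds ?_
    exact ⟨0, by simpa, h0⟩
  obtain ⟨δ, hδ0, hδ1⟩ : ∃ δ, 0 < δ ∧ δ < min δ' R := exists_between (by simp; constructor <;> linarith)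
  rw [lt_min_iff] at hδ1
  obtain ⟨L0, hL0⟩ : ∃ L, ψ ⁻¹' (K ∪ φ '' closedBall 0 R) ⊆ closedBall 0 L :=
    (hψ.isInducing.isCompact_preimage' hK' hKψ).isBounded.subset_closedBall 0
  set L := max L0 (3 * ε)
  have hL : 3 * ε ≤ L := le_max_right _ _
  obtain ⟨a, ha0, ha1⟩ : ∃ a, 0 < a ∧ a < min δ r := exists_between (by simp; constructor <;> linarith)
  rw [lt_min_iff] at ha1
  obtain ⟨s, -, s2, s3⟩ := radial_s9 (E := E) ha0 ha1.2 hrR ha1.1 hδ1.2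
  obtain ⟨t, t1, t2, t3⟩ := radial_s9 (E := E) (a := ε) (b := 2 * ε) (c := L) (d := L + 1) hεpos
    (by linarith) (by linarith) (by linarith) (by linarith)
  obtain ⟨S, S1, S2⟩ := extend hφ s s2
  obtain ⟨T, T1, T2⟩ := extend hψ t t2
  have sR : ∀ v, ‖v‖ < R → ‖s v‖ < R := fun v hv => by
    by_contra h
    have := s.injective (s2 _ (not_lt.1 h))
    rw [this] at h
    exact h hv
  have sR' : ∀ v, ‖s v‖ < R → ‖v‖ < R := fun v hv => by
    by_contra h
    rw [s2 _ (not_lt.1 h)] at hv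
    exact h hv
  refine ⟨S.symm ∘ T ∘ φ ∘ s, S.symm.isOpenEmbedding.comp (T.isOpenEmbedding.comp
    (hφ.comp s.isOpenEmbedding)), fun x hx => ?_, fun k hk => ?_⟩
  · have h1 := (s3 x).1 hx
    obtain ⟨z, hz, hz'⟩ := hδ (show s x ∈ ball 0 δ' by simp; linarith)
    simp only [Function.comp]
    rw [← hz', T1, t1 z (mem_ball_zero_iff.1 hz).le, hz', ← S1, S.symm_apply_apply]
  · have hSk : S k ∈ K ∪ φ '' closedBall 0 R := by
      by_cases hk' : k ∈ Set.range φ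
      · obtain ⟨x, rfl⟩ := hk'
        by_cases hx : ‖x‖ < R
        · right
          rw [S1]
          exact ⟨s x, by simpa using (sR x hx).le, rfl⟩
        · left
          rwa [S1, s2 x (not_lt.1 hx)]
      · left
        rwa [S2 k hk']
    obtain ⟨z, hz⟩ := hKψ hSk
    have hzL : ‖z‖ ≤ L := by
      have : z ∈ closedBall (0 : E) L0 := hL0 (by rw [Set.mem_preimage, hz]; exact hSk)
      exact le_trans (by simpa using this) (le_max_left _ _)
    obtain ⟨w, rfl⟩ := t.surjective z
    have hw := (t3 w).2 hzL
    obtain ⟨u, hu, hu'⟩ := hε (show w ∈ ball 0 ε' by simp; simp only [ε] at *; linarith)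
    obtain ⟨v, rfl⟩ := s.surjective u
    refine ⟨v, by simpa using sR' v (by simpa using hu), ?_⟩
    simp only [Function.comp]
    rw [hu', T1, hz, S.symm_apply_apply]

lemma monotone_union [ProperSpace E] [WeaklyLocallyCompactSpace M] [SigmaCompactSpace M]
    (hM : ∀ K : Set M, IsCompact K → ∃ ψ : E → M, IsOpenEmbedding ψ ∧ K ⊆ Set.range ψ) :
    Nonempty (E ≃ₜ M) := by
  obtain ⟨φ0, hφ0, -⟩ := hM ∅ isCompact_empty
  have hstep : ∀ (i : ℕ) (φ : {φ : E → M // IsOpenEmbedding φ}),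
      ∃ φ' : {φ : E → M // IsOpenEmbedding φ}, (∀ x, ‖x‖ ≤ i + 1 → φ'.1 x = φ.1 x) ∧
        compactCovering M i ⊆ φ'.1 '' ball 0 (i + 2) := fun i φ => by
    obtain ⟨φ', h1, h2, h3⟩ := step hM φ.2 (r := i + 1) (R := i + 2) (by positivity) (by linarith)
      (isCompact_compactCovering M i)
    exact ⟨⟨φ', h1⟩, h2, h3⟩
  choose F hF1 hF2 using hstep
  let φ : ℕ → {φ : E → M // IsOpenEmbedding φ} := fun i => Nat.rec ⟨φ0, hφ0⟩ F i
  have hφs : ∀ i, φ (i + 1) = F i (φ i) := fun i => rfl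
  have hst : ∀ (i k : ℕ) x, ‖x‖ ≤ (i : ℝ) + 1 → (φ (i + k)).1 x = (φ i).1 x := by
    intro i k x hx
    induction k with
    | zero => rfl
    | succ k ih =>
      rw [← add_assoc, hφs, hF1, ih]
      push_cast
      have : (0 : ℝ) ≤ k := by positivity
      linarith
  let Φ : E → M := fun x => (φ ⌊‖x‖⌋₊).1 x
  have hΦ : ∀ (i : ℕ) x, ‖x‖ < (i : ℝ) + 1 → Φ x = (φ i).1 x := by
    intro i x hx
    have : ⌊‖x‖⌋₊ ≤ i := by
      have : ⌊‖x‖⌋₊ < i + 1 := (Nat.floor_lt (norm_nonneg _)).2 (by push_cast; exact hx)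
      omega
    obtain ⟨k, rfl⟩ := Nat.exists_eq_add_of_le this
    exact (hst _ _ _ (Nat.lt_floor_add_one _).le).symm
  have hloc : ∀ x, ∃ i, Φ =ᶠ[𝓝 x] (φ i).1 := fun x => by
    refine ⟨⌊‖x‖⌋₊, ?_⟩
    filter_upwards [(isOpen_lt continuous_norm continuous_const).mem_nhds
      (Nat.lt_floor_add_one ‖x‖)] with y hy
    exact hΦ _ _ hy
  have hcont : Continuous Φ := continuous_iff_continuousAt.2 fun x => by
    obtain ⟨i, hi⟩ := hloc x
    exact (φ i).2.continuous.continuousAt.congr hi.symm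
  have hopen : IsOpenMap Φ := IsOpenMap.of_nhds_le fun x => by
    obtain ⟨i, hi⟩ := hloc x
    rw [Filter.map_congr hi, hi.eq_of_nhds]
    exact (φ i).2.isOpenMap.nhds_le x
  have hinj : Function.Injective Φ := fun x y hxy => by
    have hx : ‖x‖ < (⌊max ‖x‖ ‖y‖⌋₊ : ℝ) + 1 := (le_max_left _ _).trans_lt (Nat.lt_floor_add_one _)
    have hy : ‖y‖ < (⌊max ‖x‖ ‖y‖⌋₊ : ℝ) + 1 := (le_max_right _ _).trans_lt (Nat.lt_floor_add_one _)
    rw [hΦ _ x hx, hΦ _ y hy] at hxy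
    exact (φ _).2.injective hxy
  have hsurj : Function.Surjective Φ := fun y => by
    obtain ⟨i, hi⟩ : ∃ i, y ∈ compactCovering M i := by
      have := Set.mem_univ y
      rwa [← iUnion_compactCovering, Set.mem_iUnion] at this
    obtain ⟨v, hv, rfl⟩ := hF2 i (φ i) hi
    refine ⟨v, hΦ (i + 1) v ?_⟩
    push_cast
    have : ‖v‖ < i + 2 := by simpa using hv
    linarith
  exact ⟨(Equiv.ofBijective Φ ⟨hinj, hsurj⟩).toHomeomorphOfContinuousOpen hcont hopen⟩
end

lemma exists_chart {E Y : Type*} [NormedAddCommGroup E] [NormedSpace ℝ E] [ProperSpace E]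
    [Nontrivial E] [TopologicalSpace Y] [T2Space Y] {U : Set Y} (hU : IsOpen U) (y : U)
    {V : Set E} (hV : IsOpen V) (e : U ≃ₜ V) :
    ∃ ψ : E → Y, IsOpenEmbedding ψ ∧ closure (Set.range ψ) ≠ Set.univ := by
  let j : V → Y := fun v => (e.symm v : Y)
  have hj : IsOpenEmbedding j := hU.isOpenEmbedding_subtypeVal.comp e.symm.isOpenEmbedding
  obtain ⟨r, hr, hrV⟩ := Metric.isOpen_iff.1 hV (e y) (e y).2
  have h2 : (0 : ℝ) < r / 2 := by positivity
  have hcl : closedBall (e y : E) (r / 2) ⊆ V := (closedBall_subset_ball (by linarith)).trans hrV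
  let B := OpenPartialHomeomorph.univBall (e y : E) (r / 2)
  have hBt : ∀ x, B x ∈ ball (e y : E) (r / 2) := fun x => by
    have := B.map_source (x := x) (by simp [B])
    rwa [OpenPartialHomeomorph.univBall_target _ h2] at this
  have hBV : ∀ x, B x ∈ V := fun x => hcl (ball_subset_closedBall (hBt x))
  have hB : IsOpenEmbedding B := B.isOpenEmbedding (by simp [B])
  let B' : E → V := fun x => ⟨B x, hBV x⟩
  have hB' : IsOpenEmbedding B' := by
    refine IsOpenEmbedding.of_comp _ hV.isOpenEmbedding_subtypeVal ?_
    exact hB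
  refine ⟨j ∘ B', hj.comp hB', fun hcon => ?_⟩
  obtain ⟨w, hw⟩ : ∃ w : E, ‖w‖ = 3 * r / 4 := exists_norm_eq E (by positivity)
  have hwV : (e y : E) + w ∈ V := hrV (by simp [hw]; linarith)
  have hC : IsClosed (j '' (Subtype.val ⁻¹' closedBall (e y : E) (r / 2))) := by
    refine (IsCompact.image ?_ hj.continuous).isClosed
    exact hV.isOpenEmbedding_subtypeVal.isInducing.isCompact_preimage'
      (isCompact_closedBall _ _) (by simpa using hcl)
  have hsub : closure (Set.range (j ∘ B')) ⊆ _ := closure_minimal (by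
    rintro _ ⟨x, rfl⟩
    exact ⟨B' x, ball_subset_closedBall (hBt x), rfl⟩) hC
  rw [hcon] at hsub
  obtain ⟨v, hv, hv'⟩ := hsub (Set.mem_univ (j ⟨_, hwV⟩))
  rw [hj.injective hv'] at hv
  have hv2 : dist ((e y : E) + w) (e y : E) ≤ r / 2 := hv
  simp [hw] at hv2
  linarith

open Pointwise

/-- Let `n ≥ 1`, let `Y` be a nonempty compact metric space, and let a group `G`
act on `Y` by homeomorphisms with a topological fractal structure. If `Y` is a topological
`n`-manifold (every point has an open neighborhood homeomorphic to an open subset of Euclidean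
`n`-space), then `Y` is homeomorphic to the `n`-sphere. -/
theorem sphere_of_fractal_manifold {G Y : Type*} [Group G] [MetricSpace Y] [CompactSpace Y]
    [Nonempty Y] [MulAction G Y] (n : ℕ) (hn : 1 ≤ n)
    (hcont : ∀ g : G, Continuous fun y : Y => g • y)
    (hfractal : ∀ F : Set Y, IsClosed F → F ≠ Set.univ →
      ∀ U : Set Y, IsOpen U → U.Nonempty → ∃ g : G, g • F ⊆ U)
    (hmanifold : ∀ y : Y, ∃ U : Set Y, IsOpen U ∧ y ∈ U ∧
      ∃ V : Set (EuclideanSpace ℝ (Fin n)), IsOpen V ∧ Nonempty (U ≃ₜ V)) :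
    Nonempty (Y ≃ₜ (Metric.sphere (0 : EuclideanSpace ℝ (Fin (n + 1))) 1)) := by
  have : Nonempty (Fin n) := ⟨⟨0, hn⟩⟩
  obtain ⟨y0⟩ := ‹Nonempty Y›
  obtain ⟨U, hU, hyU, V, hV, ⟨e⟩⟩ := hmanifold y0
  obtain ⟨ψ0, hψ0, hcl0⟩ := exists_chart hU ⟨y0, hyU⟩ hV e
  let act : G → Y ≃ₜ Y := fun g =>
    ⟨MulAction.toPerm g, hcont g, hcont g⁻¹⟩
  have key : ∀ q : Y, ∀ ε > 0, ∃ ψ : EuclideanSpace ℝ (Fin n) → Y, IsOpenEmbedding ψ ∧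
      (ball q ε)ᶜ ⊆ Set.range ψ ∧ closure (Set.range ψ) ≠ Set.univ := by
    intro q ε hε
    obtain ⟨g, hg⟩ := hfractal (ball q ε)ᶜ isOpen_ball.isClosed_compl
      (fun h => (h ▸ Set.mem_univ q : q ∈ (ball q ε)ᶜ) (mem_ball_self hε))
      (Set.range ψ0) hψ0.isOpen_range (Set.range_nonempty _)
    refine ⟨(act g).symm ∘ ψ0, (act g).symm.isOpenEmbedding.comp hψ0, fun x hx => ?_, fun h => ?_⟩
    · obtain ⟨z, hz⟩ := hg (Set.smul_mem_smul_set hx)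
      refine ⟨z, ?_⟩
      simp only [Function.comp, hz]
      exact (act g).symm_apply_apply x
    · rw [Set.range_comp, ← (act g).symm.image_closure] at h
      apply hcl0
      have := congrArg (fun s => act g '' s) h
      simpa [Set.image_image, Set.image_univ, (act g).surjective.range_eq] using this
  let D : ℕ → Set Y := fun m => ⋃ (q : Y) (ψ : EuclideanSpace ℝ (Fin n) → Y)
    (_ : IsOpenEmbedding ψ ∧ (ball q (1 / ((m : ℝ) + 1)))ᶜ ⊆ Set.range ψ), (closure (Set.range ψ))ᶜ
  have hDo : ∀ m, IsOpen (D m) := fun m =>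
    isOpen_iUnion fun q => isOpen_iUnion fun ψ => isOpen_iUnion fun _ => isClosed_closure.isOpen_compl
  have hDd : ∀ m, Dense (D m) := fun m => by
    rw [Metric.dense_iff]
    intro q r hr
    have hm : 0 < 1 / ((m : ℝ) + 1) := by positivity
    obtain ⟨ψ, h1, h2, h3⟩ := key q (min r (1 / ((m : ℝ) + 1))) (lt_min hr hm)
    obtain ⟨p, hp⟩ := (Set.ne_univ_iff_exists_notMem _).1 h3
    refine ⟨p, ?_, ?_⟩
    · by_contra hpr
      exact hp (subset_closure (h2 fun h => hpr (ball_subset_ball (min_le_left _ _) h)))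
    · simp only [D, Set.mem_iUnion]
      exact ⟨q, ψ, ⟨h1, (Set.compl_subset_compl.2 (ball_subset_ball (min_le_right _ _))).trans h2⟩, hp⟩
  obtain ⟨p, hp⟩ := (dense_iInter_of_isOpen_nat hDo hDd).nonempty (h := ⟨y0⟩)
  rw [Set.mem_iInter] at hp
  have hop : IsOpen ({p}ᶜ : Set Y) := isOpen_compl_singleton
  have : LocallyCompactSpace ({p}ᶜ : Set Y) := hop.locallyCompactSpace
  obtain ⟨Φ⟩ := monotone_union (E := EuclideanSpace ℝ (Fin n)) (M := ({p}ᶜ : Set Y)) (by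
    intro K hK
    have hKc : IsClosed (Subtype.val '' K : Set Y) := (hK.image continuous_subtype_val).isClosed
    obtain ⟨ε, hε, hεK⟩ := Metric.isOpen_iff.1 hKc.isOpen_compl p (by
      rintro ⟨x, -, hx⟩
      exact x.2 hx)
    obtain ⟨m, hm⟩ := exists_nat_one_div_lt (half_pos hε)
    have := hp m
    simp only [D, Set.mem_iUnion] at this
    obtain ⟨q, ψ, ⟨h1, h2⟩, h3⟩ := this
    have h4 : p ∉ Set.range ψ := fun h => h3 (subset_closure h)
    have h5 : p ∈ ball q (1 / ((m : ℝ) + 1)) := by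
      by_contra h
      exact h4 (h2 h)
    refine ⟨fun x => ⟨ψ x, fun h => h4 ⟨x, h⟩⟩,
      IsOpenEmbedding.of_comp _ hop.isOpenEmbedding_subtypeVal h1, fun k hk => ?_⟩
    obtain ⟨x, hx⟩ := @h2 k.1 (fun h => hεK (show k.1 ∈ ball p ε by
      rw [mem_ball] at *
      have := dist_triangle_right k.1 p q
      linarith) ⟨k, hk, rfl⟩)
    exact ⟨x, Subtype.ext hx⟩)
  have e1 : OnePoint (EuclideanSpace ℝ (Fin n)) ≃ₜ Y :=
    OnePoint.equivOfIsEmbeddingOfRangeEq p (fun x => (Φ x : Y))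
      (IsEmbedding.subtypeVal.comp Φ.isEmbedding) (by
        rw [show (fun x => (Φ x : Y)) = Subtype.val ∘ Φ from rfl, Φ.surjective.range_comp]; exact Subtype.range_val)
  exact ⟨e1.symm.trans (onePointEquivSphereOfFinrankEq (by simp))⟩
end
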